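/- The set 𝓜 of all reinsurance treaties for a fixed probability measure μ on ℝ₊ⁿ is compact in the topology of weak convergence of probability measures. -/

import Mathlib

open MeasureTheory Filter Topology Set

noncomputable section

/-- `Vec n` is the space `ℝⁿ` of loss vectors. -/
abbrev Vec (n : ℕ) : Type := Fin n → ℝ

/-- `Pt n` is the space `ℝⁿ × ℝⁿ` of pairs (original loss, reinsured amount). -/
abbrev Pt (n : ℕ) : Type := Vec n × Vec n

/-- The set `𝒜 = {(x,y) : 0 ≤ yᵢ ≤ xᵢ for all i}` on which treaties are concentrated. -/
def treatySet (n : ℕ) : Set (Pt n) := {p | ∀ i, 0 ≤ p.2 i ∧ p.2 i ≤ p.1 i}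

/-!
Weak limits keep the first marginal, because pushforward along a continuous map is continuous, and
keep full mass on the closed set `𝒜`, by the portmanteau theorem. For tightness, choose a compact
`K` carrying all but `ε` of `μ`; every treaty then gives all but `ε` of its mass to
`{(x, y) ∈ 𝒜 | x ∈ K}`, which is compact because the constraint `0 ≤ y ≤ x` bounds `y` when `x`
ranges over `K`. Prokhorov's theorem concludes.
-/

section WeakTopology

variable {X : Type*} [TopologicalSpace X] [MeasurableSpace X] [OpensMeasurableSpace X]

theorem upperSemicontinuous_probabilityMeasure_apply [HasOuterApproxClosed X] {A : Set X}
    (hA : IsClosed A) :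
    UpperSemicontinuous fun η : ProbabilityMeasure X ↦ (η : Measure X) A :=
  upperSemicontinuous_iff_limsup_le.2 fun _ ↦
    ProbabilityMeasure.limsup_measure_closed_le_of_tendsto tendsto_id hA

theorem isClosed_setOf_probabilityMeasure_apply_eq_one [HasOuterApproxClosed X] {A : Set X}
    (hA : IsClosed A) :
    IsClosed {η : ProbabilityMeasure X | (η : Measure X) A = 1} := by
  simpa only [preimage, mem_Ici, one_le_prob_iff] using
    (upperSemicontinuous_probabilityMeasure_apply hA).isClosed_preimage 1

theorem isClosed_setOf_probabilityMeasure_map_eq {Y : Type*} [TopologicalSpace Y]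
    [HasOuterApproxClosed Y] [MeasurableSpace Y] [BorelSpace Y] {f : X → Y}
    (hf : Continuous f) (μ : ProbabilityMeasure Y) :
    IsClosed {η : ProbabilityMeasure X | (η : Measure X).map f = μ} := by
  simpa only [preimage, mem_singleton_iff, ← ProbabilityMeasure.toMeasure_injective.eq_iff,
    ProbabilityMeasure.toMeasure_map] using
    (isClosed_singleton (x := μ)).preimage (ProbabilityMeasure.continuous_map hf)

end WeakTopology

theorem isTightMeasureSet_of_image_map {X Y : Type*} [TopologicalSpace X] [MeasurableSpace X]
    [TopologicalSpace Y] [MeasurableSpace Y] {f : X → Y} (hf : Measurable f) {A : Set X}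
    (hfA : ∀ K, IsCompact K → IsCompact (A ∩ f ⁻¹' K)) {S : Set (Measure X)}
    (hSA : ∀ η ∈ S, η Aᶜ = 0) (hS : IsTightMeasureSet (Measure.map f '' S)) :
    IsTightMeasureSet S := by
  rw [isTightMeasureSet_iff_exists_isCompact_measure_compl_le] at hS ⊢
  intro ε hε
  obtain ⟨K, hK, hKε⟩ := hS ε hε
  refine ⟨A ∩ f ⁻¹' K, hfA K hK, fun η hη ↦ ?_⟩
  calc η (A ∩ f ⁻¹' K)ᶜ ≤ η Aᶜ + η (f ⁻¹' Kᶜ) := by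
        rw [compl_inter, preimage_compl]
        exact measure_union_le _ _
    _ = η (f ⁻¹' Kᶜ) := by rw [hSA η hη, zero_add]
    _ ≤ η.map f Kᶜ := Measure.le_map_apply hf.aemeasurable _
    _ ≤ ε := hKε _ (mem_image_of_mem _ hη)

theorem stmt0_general {X Y : Type*} [TopologicalSpace X] [T2Space X] [HasOuterApproxClosed X]
    [MeasurableSpace X] [BorelSpace X] [TopologicalSpace Y] [HasOuterApproxClosed Y]
    [MeasurableSpace Y] [BorelSpace Y] {f : X → Y} (hf : Continuous f) {A : Set X}
    (hA : IsClosed A) (hfA : ∀ K, IsCompact K → IsCompact (A ∩ f ⁻¹' K))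
    (μ : ProbabilityMeasure Y) (hμ : IsTightMeasureSet {(μ : Measure Y)}) :
    IsCompact {η : ProbabilityMeasure X | (η : Measure X).map f = μ ∧ (η : Measure X) A = 1} := by
  have hclosed : IsClosed
      {η : ProbabilityMeasure X | (η : Measure X).map f = μ ∧ (η : Measure X) A = 1} :=
    (isClosed_setOf_probabilityMeasure_map_eq hf μ).inter
      (isClosed_setOf_probabilityMeasure_apply_eq_one hA)
  rw [← hclosed.closure_eq]
  refine isCompact_closure_of_isTightMeasureSet
    (isTightMeasureSet_of_image_map hf.measurable hfA ?_ (hμ.subset ?_))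
  · rintro _ ⟨η, ⟨-, hηA⟩, rfl⟩
    exact (prob_compl_eq_zero_iff hA.measurableSet).2 hηA
  · rintro _ ⟨_, ⟨η, ⟨hημ, -⟩, rfl⟩, rfl⟩
    exact hημ

section OrderInterval

variable {E : Type*} [TopologicalSpace E] [Preorder E] [OrderClosedTopology E]

theorem isClosed_setOf_snd_mem_Icc_fst (a : E) : IsClosed {p : E × E | p.2 ∈ Icc a p.1} :=
  (isClosed_le continuous_const continuous_snd).inter (isClosed_le continuous_snd continuous_fst)

theorem isCompact_setOf_snd_mem_Icc_fst_inter_preimage [CompactIccSpace E] (a : E) {K : Set E}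
    (hK : IsCompact K) (hKb : BddAbove K) :
    IsCompact ({p : E × E | p.2 ∈ Icc a p.1} ∩ Prod.fst ⁻¹' K) := by
  obtain ⟨b, hb⟩ := hKb
  convert! (hK.prod (isCompact_Icc (a := a) (b := b))).inter_left
    (isClosed_setOf_snd_mem_Icc_fst a) using 1
  ext ⟨x, y⟩
  exact ⟨fun ⟨hy, hx⟩ ↦ ⟨hy, hx, hy.1, hy.2.trans (hb hx)⟩, fun ⟨hy, hx, _⟩ ↦ ⟨hy, hx⟩⟩

end OrderInterval

theorem treatySet_eq_setOf_mem_Icc (n : ℕ) : treatySet n = {p | p.2 ∈ Icc 0 p.1} := by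
  ext p
  exact forall_and

theorem isClosed_treatySet (n : ℕ) : IsClosed (treatySet n) :=
  treatySet_eq_setOf_mem_Icc n ▸ isClosed_setOf_snd_mem_Icc_fst 0

theorem isCompact_treatySet_inter_preimage_fst (n : ℕ) (K : Set (Vec n)) (hK : IsCompact K) :
    IsCompact (treatySet n ∩ Prod.fst ⁻¹' K) :=
  treatySet_eq_setOf_mem_Icc n ▸
    isCompact_setOf_snd_mem_Icc_fst_inter_preimage 0 hK hK.isBounded.bddAbove

/-- the set 𝓜 of reinsurance treaties for a fixed probability measure `μ`
on `ℝ₊ⁿ` is compact in the topology of weak convergence. -/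
theorem stmt0 (n : ℕ) (μ : Measure (Vec n)) [IsProbabilityMeasure μ]
    (hμ : μ {x | ∀ i, 0 ≤ x i} = 1) :
    IsCompact {η : ProbabilityMeasure (Pt n) |
      η.toMeasure.map Prod.fst = μ ∧ η.toMeasure (treatySet n) = 1} :=
  stmt0_general continuous_fst (isClosed_treatySet n) (isCompact_treatySet_inter_preimage_fst n)
    ⟨μ, inferInstance⟩ (isTightMeasureSet_singleton (μ := μ))
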